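/- Let (S,T) be modular data on Φ and suppose a ∈ Φ is such that for all b, c ∈ Φ, T_{bb} = T_{cc} implies S_{ab} · conj(S_{ac}) is a nonnegative real number. Then every modular invariant M satisfies M_{aa} ≥ 1 (indeed M_{aa} = ∑_{b,c∈Φ} S_{ab} M_{bc} conj(S_{ac}) > 0). -/

import Mathlib

open scoped BigOperators
open Complex

/-- Modular data on a finite set `Φ` with distinguished element `zero`: a unitary symmetric
matrix `S`, a diagonal matrix `T` of finite order, with the `zero`-row of `S` real and
strictly positive, `S² = (ST)³`, and nonnegative-integer fusion coefficients `N a b c` given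
by Verlinde's formula. -/
structure ModularData (Φ : Type) [Fintype Φ] [DecidableEq Φ] where
  zero : Φ
  S : Matrix Φ Φ ℂ
  T : Matrix Φ Φ ℂ
  N : Φ → Φ → Φ → ℕ
  S_unitary : S * S.conjTranspose = 1
  S_symm : ∀ a b, S a b = S b a
  T_diag : ∀ a b, a ≠ b → T a b = 0
  T_order : ∃ m : ℕ, 0 < m ∧ T ^ m = 1
  S_zero_pos : ∀ a, (S zero a).im = 0 ∧ 0 < (S zero a).re
  modular_rel : S ^ 2 = (S * T) ^ 3
  verlinde : ∀ a b c,
    (N a b c : ℂ) = ∑ d, S a d * S b d * (starRingEnd ℂ) (S c d) / S zero d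

/-- A modular invariant for modular data `(S,T)`: a matrix of nonnegative integers commuting
(after casting to `ℂ`) with `S` and `T`, and with `M 0 0 = 1`. -/
def IsModularInvariant {Φ : Type} [Fintype Φ] [DecidableEq Φ] (M : ModularData Φ)
    (Z : Matrix Φ Φ ℕ) : Prop :=
  (Z.map (fun n => (n : ℂ))) * M.S = M.S * (Z.map (fun n => (n : ℂ))) ∧
  (Z.map (fun n => (n : ℂ))) * M.T = M.T * (Z.map (fun n => (n : ℂ))) ∧
  Z M.zero M.zero = 1

/-!
Conjugating `A` by the unitary matrix `S` gives `A = S A Sᴴ`, so `A a a` is the sum of the terms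
`S a b * A b c * star (S a c)`. Since `A` commutes with the diagonal matrix `T`, its entry `A b c`
vanishes unless `T b b = T c c`, and then `S a b * star (S a c)` is nonnegative by hypothesis.
Thus every term is nonnegative, and the one at `b = c = o` does not vanish.
-/

section Matrix

open scoped Matrix

variable {ι R : Type*} [Fintype ι]

lemma apply_eq_sum_of_commute_of_mul_conjTranspose_eq_one [DecidableEq ι] [Semiring R]
    [StarRing R] {S A : Matrix ι ι R} (hAS : Commute A S) (hS : S * Sᴴ = 1) (a a' : ι) :
    A a a' = ∑ b, ∑ c, S a b * A b c * star (S a' c) := by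
  have hconj : A = S * A * Sᴴ := by rw [← hAS.eq, Matrix.mul_assoc, hS, Matrix.mul_one]
  calc A a a' = (S * A * Sᴴ) a a' := congr_fun₂ hconj a a'
    _ = ∑ c, ∑ b, S a b * A b c * star (S a' c) := by
      simp only [Matrix.mul_apply, Matrix.conjTranspose_apply, Finset.sum_mul]
    _ = ∑ b, ∑ c, S a b * A b c * star (S a' c) := Finset.sum_comm

variable [CommSemiring R] [IsCancelMulZero R] {S T A : Matrix ι ι R}

lemma apply_self_eq_of_commute_isDiag (hAT : Commute A T) (hT : T.IsDiag) {b c : ι}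
    (hbc : A b c ≠ 0) : T b b = T c c := by
  classical
  have hentry := congr_fun₂ hAT.eq b c
  rw [← hT.diagonal_diag, Matrix.mul_diagonal, Matrix.diagonal_mul, mul_comm] at hentry
  exact (mul_right_cancel₀ hbc hentry).symm

variable [PartialOrder R] [IsOrderedRing R] [StarRing R]

lemma mul_mul_star_nonneg_of_commute_isDiag (hAT : Commute A T) (hT : T.IsDiag)
    (hA : ∀ b c, 0 ≤ A b c) {a : ι} (ha : ∀ b c, T b b = T c c → 0 ≤ S a b * star (S a c))
    (b c : ι) : 0 ≤ S a b * A b c * star (S a c) := by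
  rw [mul_right_comm]
  obtain hbc | hbc := eq_or_ne (A b c) 0
  · rw [hbc, mul_zero]
  · exact mul_nonneg (ha b c (apply_self_eq_of_commute_isDiag hAT hT hbc)) (hA b c)

theorem modularData_forced_exponent_general [DecidableEq ι] (hS : S * Sᴴ = 1) (hT : T.IsDiag)
    (hAS : Commute A S) (hAT : Commute A T) (hA : ∀ b c, 0 ≤ A b c)
    {o a : ι} (ho : A o o ≠ 0) (hao : S a o ≠ 0)
    (ha : ∀ b c, T b b = T c c → 0 ≤ S a b * star (S a c)) :
    A a a = ∑ b, ∑ c, S a b * A b c * star (S a c) ∧ 0 < A a a := by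
  have hsum := apply_eq_sum_of_commute_of_mul_conjTranspose_eq_one hAS hS a a
  have hnonneg := mul_mul_star_nonneg_of_commute_isDiag hAT hT hA ha
  have hpos : 0 < S a o * A o o * star (S a o) :=
    (hnonneg o o).lt_of_ne' (mul_ne_zero (mul_ne_zero hao ho) (star_ne_zero.mpr hao))
  refine ⟨hsum, ?_⟩
  calc 0 < S a o * A o o * star (S a o) := hpos
    _ ≤ ∑ c, S a o * A o c * star (S a c) :=
      Finset.single_le_sum (fun c _ ↦ hnonneg o c) (Finset.mem_univ o)
    _ ≤ ∑ b, ∑ c, S a b * A b c * star (S a c) :=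
      Finset.single_le_sum (f := fun b ↦ ∑ c, S a b * A b c * star (S a c))
        (fun b _ ↦ Finset.sum_nonneg fun c _ ↦ hnonneg b c) (Finset.mem_univ o)
    _ = A a a := hsum.symm

end Matrix

namespace ModularData

variable {Φ : Type} [Fintype Φ] [DecidableEq Φ] (M : ModularData Φ)

lemma isDiag_T : M.T.IsDiag := fun b c ↦ M.T_diag b c

lemma S_apply_zero_ne_zero (a : Φ) : M.S a M.zero ≠ 0 := by
  rw [M.S_symm]
  exact fun h ↦ (M.S_zero_pos a).2.ne' (congrArg re h)

end ModularData

/-- Suppose `a ∈ Φ` is such that `T_{bb} = T_{cc}` implies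
`S_{ab} conj(S_{ac})` is a nonnegative real. Then every modular invariant `Z` satisfies
`Z_{aa} = ∑_{b,c} S_{ab} Z_{bc} conj(S_{ac})` and `Z_{aa} ≥ 1`. -/
theorem modularData_forced_exponent
    {Φ : Type} [Fintype Φ] [DecidableEq Φ] (M : ModularData Φ)
    (a : Φ)
    (ha : ∀ b c, M.T b b = M.T c c →
      ∃ r : ℝ, 0 ≤ r ∧ M.S a b * (starRingEnd ℂ) (M.S a c) = (r : ℂ))
    (Z : Matrix Φ Φ ℕ) (hZ : IsModularInvariant M Z) :
    (Z a a : ℂ) = (∑ b, ∑ c, M.S a b * (Z b c : ℂ) * (starRingEnd ℂ) (M.S a c)) ∧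
    1 ≤ Z a a := by
  open scoped ComplexOrder in
  have hforced := modularData_forced_exponent_general M.S_unitary M.isDiag_T hZ.1 hZ.2.1
    (fun b c ↦ Nat.cast_nonneg (Z b c)) (by simp [hZ.2.2]) (M.S_apply_zero_ne_zero a)
    fun b c hbc ↦ (ha b c hbc).elim fun r hr ↦ hr.2 ▸ Complex.zero_le_real.mpr hr.1
  exact ⟨hforced.1, Nat.cast_pos.mp hforced.2⟩
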